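/- There exists an absolute constant M > 0 such that for every F in the Bargmann–Fock space F²(ℂ) one has inf_{|λ|=1} ‖F − λ·1‖_F ≤ M · ‖ |F| − 1 ‖_F, where the infimum is over unimodular complex scalars λ and 1 denotes the constant function one. -/

import Mathlib

open MeasureTheory

/-- The Fock norm of a function `F : ℂ → E`:
`‖F‖_F² = (1/π) ∫_ℂ ‖F(z)‖² e^{-|z|²} dm(z)`. -/
noncomputable def fockNorm {E : Type*} [NormedAddCommGroup E] (F : ℂ → E) : ℝ :=
  Real.sqrt ((1 / Real.pi) * ∫ z : ℂ, ‖F z‖ ^ 2 * Real.exp (-‖z‖ ^ 2))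

/-!
Where an entire function `F` has no zeros, Cauchy–Schwarz applied to the mean value property of
`1 / F` bounds the variance of `F` on a disc by the integral of `(|F| - 1 / |F|)²`, because
`|F c|² + |F c|⁻² ≥ 2` at the centre. If `|F| - 1` is small in `L²` of the disc, then `F` has no
zeros on the half disc; otherwise the plain area estimate for `F'` suffices. Either way `|F'|` at
the centre is controlled by `|F| - 1` on the disc. A Hardy inequality along rays bounds `F - F 0`
in the Fock norm by a weighted norm of `F'`; applying the local estimate on discs of radius
`1 / (1 + |z|)`, where the Gaussian is essentially constant, and exchanging the integrals gives
`‖F - F 0‖ ≲ ‖|F| - 1‖`. Finally `F 0` is replaced by a nearest unimodular scalar.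
-/

section AreaMeanValue

open Metric Real

lemma circleMap_eq_add_polarCoord_symm (c : ℂ) (p : ℝ × ℝ) :
    circleMap c p.1 p.2 = c + Complex.polarCoord.symm p := by
  rw [Complex.polarCoord_symm_apply, circleMap, Complex.exp_mul_I, Complex.ofReal_cos,
    Complex.ofReal_sin]

lemma setIntegral_Ioo_neg_pi_pi_circleMap {E : Type*} [NormedAddCommGroup E] [NormedSpace ℝ E]
    (f : ℂ → E) (c : ℂ) (r : ℝ) :
    ∫ θ in Set.Ioo (-π) π, f (circleMap c r θ) = (2 * π) • Real.circleAverage f c r := by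
  have periodic : Function.Periodic (fun θ => f (circleMap c r θ)) (2 * π) :=
    (periodic_circleMap c r).comp f
  have shift := periodic.intervalIntegral_add_eq (-π) 0
  rw [show -π + 2 * π = π by ring, zero_add] at shift
  rw [Real.circleAverage_def, smul_inv_smul₀ two_pi_pos.ne', ← shift,
    intervalIntegral.integral_of_le (by linarith [pi_pos]), integral_Ioc_eq_integral_Ioo]

lemma setIntegral_ball_eq_setIntegral_circleMap {E : Type*} [NormedAddCommGroup E]
    [NormedSpace ℝ E] (f : ℂ → E) (c : ℂ) (s : ℝ) :
    ∫ z in ball c s, f z =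
      ∫ p in Set.Ioo 0 s ×ˢ Set.Ioo (-π) π, p.1 • f (circleMap c p.1 p.2) := by
  have target_inter : polarCoord.target ∩ Set.Iio s ×ˢ Set.univ =
      Set.Ioo 0 s ×ˢ Set.Ioo (-π) π := by
    ext p
    simp only [polarCoord_target, Set.mem_inter_iff, Set.mem_prod, Set.mem_Ioi, Set.mem_Ioo,
      Set.mem_Iio, Set.mem_univ, and_true]
    tauto
  rw [← integral_indicator measurableSet_ball, ← integral_add_left_eq_self _ c,
    ← Complex.integral_comp_polarCoord_symm, ← target_inter,
    ← setIntegral_indicator (measurableSet_Iio.prod MeasurableSet.univ)]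
  refine setIntegral_congr_fun polarCoord.open_target.measurableSet fun p hp => ?_
  have hp_pos : 0 < p.1 := hp.1
  simp only [← circleMap_eq_add_polarCoord_symm]
  by_cases h : p.1 < s <;> simp [dist_eq_norm, abs_of_pos hp_pos, h]

theorem setIntegral_ball_eq_integral_circleAverage {E : Type*} [NormedAddCommGroup E]
    [NormedSpace ℝ E] {f : ℂ → E} {c : ℂ} {s : ℝ} (hs : 0 ≤ s)
    (hf : ContinuousOn f (closedBall c s)) :
    ∫ z in ball c s, f z = ∫ r in 0..s, (2 * π * r) • Real.circleAverage f c r := by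
  have integrable : IntegrableOn (fun p : ℝ × ℝ => p.1 • f (circleMap c p.1 p.2))
      (Set.Ioo 0 s ×ˢ Set.Ioo (-π) π) := by
    refine IntegrableOn.mono_set (t := Set.Icc 0 s ×ˢ Set.Icc (-π) π) ?_
      (Set.prod_mono Set.Ioo_subset_Icc_self Set.Ioo_subset_Icc_self)
    refine ContinuousOn.integrableOn_compact (isCompact_Icc.prod isCompact_Icc)
      (continuousOn_fst.smul (hf.comp (by unfold circleMap; fun_prop) ?_))
    rintro p ⟨hp, -⟩
    simp [dist_eq_norm, abs_of_nonneg hp.1, hp.2]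
  rw [setIntegral_ball_eq_setIntegral_circleMap, Measure.volume_eq_prod,
    setIntegral_prod _ integrable, intervalIntegral.integral_of_le hs,
    integral_Ioc_eq_integral_Ioo]
  refine setIntegral_congr_fun measurableSet_Ioo fun r _ => ?_
  simp only [integral_smul, setIntegral_Ioo_neg_pi_pi_circleMap, smul_smul]
  ring_nf

theorem setIntegral_ball_eq_smul_center {E : Type*} [NormedAddCommGroup E] [NormedSpace ℂ E]
    [CompleteSpace E] {f : ℂ → E} {c : ℂ} {s : ℝ} (hs : 0 ≤ s) (hf : DiffContOnCl ℂ f (ball c s)) :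
    ∫ z in ball c s, f z = (π * s ^ 2) • f c := by
  rw [setIntegral_ball_eq_integral_circleAverage hs hf.continuousOn_ball]
  have mean_value : Set.EqOn (fun r => (2 * π * r) • Real.circleAverage f c r)
      (fun r => (2 * π * r) • f c) (Set.uIcc 0 s) := by
    intro r hr
    rw [Set.uIcc_of_le hs] at hr
    have hf_r : DiffContOnCl ℂ f (ball c |r|) :=
      hf.mono (ball_subset_ball (by rw [abs_of_nonneg hr.1]; exact hr.2))
    simp only [hf_r.circleAverage]
  rw [intervalIntegral.integral_congr mean_value, intervalIntegral.integral_smul_const,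
    intervalIntegral.integral_const_mul, integral_id]
  congr 1
  ring

end AreaMeanValue

section AreaEstimates

open Metric Real

section Ball

variable {X : Type*} [PseudoMetricSpace X] [ProperSpace X] [MeasurableSpace X]
  [OpensMeasurableSpace X] {μ : Measure X} [IsFiniteMeasureOnCompacts μ]

lemma integrableOn_ball_of_continuousOn {E : Type*} [NormedAddCommGroup E] {f : X → E} {c : X}
    {s : ℝ} (hf : ContinuousOn f (closedBall c s)) : IntegrableOn f (ball c s) μ :=
  (hf.integrableOn_compact' (isCompact_closedBall c s) measurableSet_closedBall).mono_set
    ball_subset_closedBall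

lemma setIntegral_ball_mono {g : X → ℝ} {c d : X} {r s : ℝ} (hg : ContinuousOn g (closedBall d s))
    (hg_nonneg : ∀ z, 0 ≤ g z) (h : ball c r ⊆ ball d s) :
    ∫ z in ball c r, g z ∂μ ≤ ∫ z in ball d s, g z ∂μ :=
  setIntegral_mono_set (integrableOn_ball_of_continuousOn hg) (.of_forall hg_nonneg) h.eventuallyLE

end Ball

lemma volume_real_ball_complex (c : ℂ) {s : ℝ} (hs : 0 ≤ s) :
    volume.real (ball c s) = π * s ^ 2 := by
  simp [measureReal_def, Complex.volume_ball, hs, mul_comm]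

lemma volume_ball_complex (c : ℂ) {r : ℝ} (hr : 0 ≤ r) :
    volume (ball c r) = ENNReal.ofReal (π * r ^ 2) := by
  rw [← volume_real_ball_complex c hr, ofReal_measureReal]

section Hilbert

variable {E : Type*} [NormedAddCommGroup E] [InnerProductSpace ℂ E] [CompleteSpace E]
  {f : ℂ → E} {c : ℂ} {r s : ℝ}

theorem setIntegral_ball_norm_sub_center_sq (hs : 0 ≤ s) (hf : DiffContOnCl ℂ f (ball c s)) :
    ∫ z in ball c s, ‖f z - f c‖ ^ 2 =
      (∫ z in ball c s, ‖f z‖ ^ 2) - π * s ^ 2 * ‖f c‖ ^ 2 := by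
  have hf_cont := hf.continuousOn_ball
  have hf_int : IntegrableOn f (ball c s) := integrableOn_ball_of_continuousOn hf_cont
  have inner_eq : ∫ z in ball c s, RCLike.re (inner ℂ (f c) (f z)) = π * s ^ 2 * ‖f c‖ ^ 2 := by
    rw [integral_re (hf_int.const_inner _), integral_inner hf_int,
      setIntegral_ball_eq_smul_center hs hf, ← Complex.coe_smul, inner_smul_right,
      inner_self_eq_norm_sq_to_K, RCLike.re_to_complex, Complex.re_ofReal_mul]
    norm_cast
  have expand (z : ℂ) : ‖f z - f c‖ ^ 2 =
      ‖f z‖ ^ 2 - 2 * RCLike.re (inner ℂ (f c) (f z)) + ‖f c‖ ^ 2 := by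
    rw [norm_sub_sq (𝕜 := ℂ), inner_re_symm]
  have norm_int : IntegrableOn (fun z => ‖f z‖ ^ 2) (ball c s) :=
    integrableOn_ball_of_continuousOn (by fun_prop)
  have inner_int : IntegrableOn (fun z => 2 * RCLike.re (inner ℂ (f c) (f z))) (ball c s) :=
    (hf_int.const_inner (f c)).re.const_mul 2
  have const_int : IntegrableOn (fun _ => ‖f c‖ ^ 2) (ball c s) :=
    integrableOn_ball_of_continuousOn continuousOn_const
  simp_rw [expand]
  rw [integral_add (by exact norm_int.sub inner_int) const_int,
    integral_sub norm_int inner_int, integral_const_mul, inner_eq, setIntegral_const,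
    volume_real_ball_complex c hs, smul_eq_mul]
  ring

lemma mul_norm_sq_le_setIntegral_ball (hs : 0 ≤ s) (hf : DiffContOnCl ℂ f (ball c s)) :
    π * s ^ 2 * ‖f c‖ ^ 2 ≤ ∫ z in ball c s, ‖f z‖ ^ 2 := by
  rw [← sub_nonneg, ← setIntegral_ball_norm_sub_center_sq hs hf]
  positivity

theorem mul_norm_deriv_sq_le_setIntegral_ball (hr : 0 < r)
    (hf : DiffContOnCl ℂ f (ball c (2 * r))) :
    π * r ^ 4 * ‖deriv f c‖ ^ 2 ≤ ∫ z in ball c (2 * r), ‖f z‖ ^ 2 := by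
  set B := ∫ z in ball c (2 * r), ‖f z‖ ^ 2
  have bound_on_sphere : ∀ z ∈ sphere c r, ‖f z‖ ≤ √(B / (π * r ^ 2)) := by
    intro z hz
    have ball_subset : ball z r ⊆ ball c (2 * r) :=
      ball_subset_ball' (by rw [mem_sphere.1 hz]; linarith)
    refine le_sqrt_of_sq_le ((le_div_iff₀' (by positivity)).2 ?_)
    exact (mul_norm_sq_le_setIntegral_ball hr.le (hf.mono ball_subset)).trans
      (setIntegral_ball_mono (hf.continuousOn_ball.norm.pow 2) (fun _ => by positivity)
        ball_subset)
  have cauchy : ‖deriv f c‖ ≤ √(B / (π * r ^ 2)) / r :=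
    Complex.norm_deriv_le_of_forall_mem_sphere_norm_le hr
      (hf.mono (ball_subset_ball (by linarith))) bound_on_sphere
  calc π * r ^ 4 * ‖deriv f c‖ ^ 2 ≤ π * r ^ 4 * (√(B / (π * r ^ 2)) / r) ^ 2 := by gcongr
    _ = B := by
      rw [div_pow, sq_sqrt (by positivity)]
      field_simp

end Hilbert

theorem setIntegral_ball_norm_sub_center_sq_le_of_ne_zero {f : ℂ → ℂ} {c : ℂ} {s : ℝ}
    (hs : 0 < s) (hf : DiffContOnCl ℂ f (ball c s)) (hf_ne : ∀ z ∈ closedBall c s, f z ≠ 0) :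
    ∫ z in ball c s, ‖f z - f c‖ ^ 2 ≤ ∫ z in ball c s, (‖f z‖ - ‖f z‖⁻¹) ^ 2 := by
  have hf_cont := hf.continuousOn_ball
  have norm_ne : ∀ z ∈ closedBall c s, ‖f z‖ ≠ 0 := fun z hz => norm_ne_zero_iff.2 (hf_ne z hz)
  have inv_mean : π * s ^ 2 * ‖f c‖⁻¹ ^ 2 ≤ ∫ z in ball c s, ‖f z‖⁻¹ ^ 2 := by
    simpa only [Pi.inv_apply, norm_inv] using mul_norm_sq_le_setIntegral_ball hs.le
      (hf.inv fun z hz => hf_ne z (closure_ball_subset_closedBall hz))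
  have sq_int : IntegrableOn (fun z => ‖f z‖ ^ 2) (ball c s) :=
    integrableOn_ball_of_continuousOn (by fun_prop)
  have inv_int : IntegrableOn (fun z => ‖f z‖⁻¹ ^ 2) (ball c s) :=
    integrableOn_ball_of_continuousOn ((hf_cont.norm.inv₀ norm_ne).pow 2)
  have const_int : IntegrableOn (fun _ => (2 : ℝ)) (ball c s) :=
    integrableOn_ball_of_continuousOn continuousOn_const
  have expand : ∫ z in ball c s, (‖f z‖ - ‖f z‖⁻¹) ^ 2 =
      (∫ z in ball c s, ‖f z‖ ^ 2) + (∫ z in ball c s, ‖f z‖⁻¹ ^ 2) - 2 * (π * s ^ 2) := by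
    rw [← integral_add sq_int inv_int, mul_comm, ← volume_real_ball_complex c hs.le,
      ← smul_eq_mul, ← setIntegral_const,
      ← integral_sub (by exact sq_int.add inv_int) const_int]
    refine setIntegral_congr_fun measurableSet_ball fun z hz => ?_
    have := norm_ne z (ball_subset_closedBall hz)
    field_simp
    ring
  have center : 2 ≤ ‖f c‖ ^ 2 + ‖f c‖⁻¹ ^ 2 := by
    have := norm_ne c (mem_closedBall_self hs.le)
    have square : ‖f c‖ ^ 2 + ‖f c‖⁻¹ ^ 2 - 2 = (‖f c‖ - ‖f c‖⁻¹) ^ 2 := by field_simp; ring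
    linarith [sq_nonneg (‖f c‖ - ‖f c‖⁻¹)]
  rw [setIntegral_ball_norm_sub_center_sq hs.le hf, expand]
  have := mul_le_mul_of_nonneg_left center (by positivity : 0 ≤ π * s ^ 2)
  linarith

end AreaEstimates

section LocalEstimate

open Metric Real

variable {E : Type*} [NormedAddCommGroup E] {c : ℂ} {s : ℝ}

lemma setIntegral_ball_norm_sq_le {f : ℂ → E} (hs : 0 ≤ s)
    (hf : ContinuousOn f (closedBall c s)) :
    ∫ z in ball c s, ‖f z‖ ^ 2 ≤ 2 * (∫ z in ball c s, (‖f z‖ - 1) ^ 2) + 2 * (π * s ^ 2) := by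
  have dev_int : IntegrableOn (fun z => 2 * (‖f z‖ - 1) ^ 2) (ball c s) :=
    integrableOn_ball_of_continuousOn (by fun_prop)
  have const_int : IntegrableOn (fun _ => (2 : ℝ)) (ball c s) :=
    integrableOn_ball_of_continuousOn continuousOn_const
  calc ∫ z in ball c s, ‖f z‖ ^ 2 ≤ ∫ z in ball c s, (2 * (‖f z‖ - 1) ^ 2 + 2) := by
        refine setIntegral_mono (integrableOn_ball_of_continuousOn (by fun_prop))
          (by exact dev_int.add const_int) fun z => ?_
        linarith [sq_nonneg (‖f z‖ - 2)]
    _ = _ := by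
        rw [integral_add dev_int const_int, integral_const_mul, setIntegral_const,
          volume_real_ball_complex c hs, smul_eq_mul, mul_comm (π * s ^ 2)]

variable [InnerProductSpace ℂ E] [CompleteSpace E]

lemma norm_deriv_le_of_setIntegral_ball_le {f : ℂ → E} (hs : 0 < s)
    (hf : DiffContOnCl ℂ f (ball c s))
    (h : ∫ z in ball c s, (‖f z‖ - 1) ^ 2 ≤ π * s ^ 2) {z : ℂ} (hz : z ∈ ball c (3 / 4 * s)) :
    ‖deriv f z‖ ≤ 128 / s := by
  have ball_subset : ball z (2 * (s / 8)) ⊆ ball c s :=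
    ball_subset_ball' (by linarith [mem_ball.1 hz])
  have cauchy : π * (s / 8) ^ 4 * ‖deriv f z‖ ^ 2 ≤ 4 * (π * s ^ 2) :=
    calc π * (s / 8) ^ 4 * ‖deriv f z‖ ^ 2 ≤ ∫ w in ball z (2 * (s / 8)), ‖f w‖ ^ 2 :=
          mul_norm_deriv_sq_le_setIntegral_ball (by positivity) (hf.mono ball_subset)
      _ ≤ ∫ w in ball c s, ‖f w‖ ^ 2 :=
          setIntegral_ball_mono (hf.continuousOn_ball.norm.pow 2) (fun _ => by positivity)
            ball_subset
      _ ≤ 4 * (π * s ^ 2) := by linarith [setIntegral_ball_norm_sq_le hs.le hf.continuousOn_ball]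
  refine le_of_sq_le_sq ?_ (by positivity)
  calc ‖deriv f z‖ ^ 2 = π * (s / 8) ^ 4 * ‖deriv f z‖ ^ 2 / (π * (s / 8) ^ 4) := by field_simp
    _ ≤ 4 * (π * s ^ 2) / (π * (s / 8) ^ 4) := by gcongr
    _ = (128 / s) ^ 2 := by field_simp; norm_num

lemma half_le_norm_of_setIntegral_ball_lt {f : ℂ → E} (hs : 0 < s)
    (hf : DiffContOnCl ℂ f (ball c s))
    (h : 2 ^ 22 * ∫ z in ball c s, (‖f z‖ - 1) ^ 2 < π * s ^ 2) {w : ℂ}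
    (hw : w ∈ closedBall c (s / 2)) : 1 / 2 ≤ ‖f w‖ := by
  contrapose! h with hfw
  set V := ∫ z in ball c s, (‖f z‖ - 1) ^ 2
  rcases le_or_gt V (π * s ^ 2) with hV_le | hV_gt
  swap
  · linarith [(by positivity : 0 ≤ π * s ^ 2)]
  have ball_subset : ball w (s / 512) ⊆ ball c (3 / 4 * s) :=
    ball_subset_ball' (by linarith [mem_closedBall.1 hw])
  have ball_subset' : ball w (s / 512) ⊆ ball c s :=
    ball_subset.trans (ball_subset_ball (by linarith))
  have norm_le : ∀ z ∈ ball w (s / 512), ‖f z‖ ≤ 3 / 4 := by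
    intro z hz
    have lipschitz : ‖f z - f w‖ ≤ 128 / s * ‖z - w‖ :=
      (convex_ball w (s / 512)).norm_image_sub_le_of_norm_deriv_le
        (fun x hx => hf.differentiableAt isOpen_ball (ball_subset' hx))
        (fun x hx => norm_deriv_le_of_setIntegral_ball_le hs hf hV_le (ball_subset hx))
        (mem_ball_self (by positivity)) hz
    have : 128 / s * ‖z - w‖ ≤ 128 / s * (s / 512) := by
      gcongr
      exact (mem_ball_iff_norm.1 hz).le
    have : 128 / s * (s / 512) = 1 / 4 := by field_simp; norm_num
    linarith [norm_le_norm_add_norm_sub' (f z) (f w)]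
  have dev_cont : ContinuousOn (fun z => (‖f z‖ - 1) ^ 2) (closedBall c s) := by
    have := hf.continuousOn_ball
    fun_prop
  have small_ball_le : (1 / 16) * (π * (s / 512) ^ 2) ≤ V :=
    calc (1 / 16) * (π * (s / 512) ^ 2) = ∫ _ in ball w (s / 512), (1 / 16 : ℝ) := by
          rw [setIntegral_const, volume_real_ball_complex w (by positivity), smul_eq_mul, mul_comm]
      _ ≤ ∫ z in ball w (s / 512), (‖f z‖ - 1) ^ 2 := by
          refine setIntegral_mono_on (integrableOn_ball_of_continuousOn continuousOn_const)
            ((integrableOn_ball_of_continuousOn dev_cont).mono_set ball_subset')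
            measurableSet_ball fun z hz => ?_
          nlinarith [norm_le z hz]
      _ ≤ V := setIntegral_ball_mono dev_cont (fun _ => by positivity) ball_subset'
  linarith

lemma mul_norm_deriv_sq_le_of_half_le_norm {f : ℂ → ℂ} (hs : 0 < s)
    (hf : DiffContOnCl ℂ f (ball c s)) (hf_half : ∀ z ∈ closedBall c s, 1 / 2 ≤ ‖f z‖) :
    π * s ^ 4 * ‖deriv f c‖ ^ 2 ≤ 144 * ∫ z in ball c s, (‖f z‖ - 1) ^ 2 := by
  have norm_pos : ∀ z ∈ closedBall c s, 0 < ‖f z‖ := fun z hz => by linarith [hf_half z hz]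
  have hf_cont := hf.continuousOn_ball
  have sub_inv_sq_le : ∀ z ∈ ball c s, (‖f z‖ - ‖f z‖⁻¹) ^ 2 ≤ 9 * (‖f z‖ - 1) ^ 2 := by
    intro z hz
    have half_le := hf_half z (ball_subset_closedBall hz)
    have pos := norm_pos z (ball_subset_closedBall hz)
    have inv_le : ‖f z‖⁻¹ ≤ 2 := by rw [inv_le_comm₀ pos two_pos]; linarith
    calc (‖f z‖ - ‖f z‖⁻¹) ^ 2 = (1 + ‖f z‖⁻¹) ^ 2 * (‖f z‖ - 1) ^ 2 := by field_simp; ring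
      _ ≤ (1 + 2) ^ 2 * (‖f z‖ - 1) ^ 2 := by gcongr
      _ = 9 * (‖f z‖ - 1) ^ 2 := by norm_num
  have cauchy : π * (s / 2) ^ 4 * ‖deriv f c‖ ^ 2 ≤ ∫ z in ball c s, ‖f z - f c‖ ^ 2 := by
    have := mul_norm_deriv_sq_le_setIntegral_ball (f := fun z => f z - f c) (half_pos hs)
      (by rw [mul_div_cancel₀ s two_ne_zero]; exact hf.sub_const (f c))
    rwa [mul_div_cancel₀ s two_ne_zero, deriv_sub_const] at this
  calc π * s ^ 4 * ‖deriv f c‖ ^ 2 = 16 * (π * (s / 2) ^ 4 * ‖deriv f c‖ ^ 2) := by ring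
    _ ≤ 16 * ∫ z in ball c s, (‖f z‖ - ‖f z‖⁻¹) ^ 2 := by
        gcongr
        exact cauchy.trans (setIntegral_ball_norm_sub_center_sq_le_of_ne_zero hs hf
          fun z hz => norm_pos_iff.1 (norm_pos z hz))
    _ ≤ 16 * ∫ z in ball c s, 9 * (‖f z‖ - 1) ^ 2 := by
        refine mul_le_mul_of_nonneg_left (setIntegral_mono_on
          (integrableOn_ball_of_continuousOn ?_) (integrableOn_ball_of_continuousOn (by fun_prop))
          measurableSet_ball sub_inv_sq_le) (by norm_num)
        exact (hf_cont.norm.sub (hf_cont.norm.inv₀ fun z hz => (norm_pos z hz).ne')).pow 2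
    _ = 144 * ∫ z in ball c s, (‖f z‖ - 1) ^ 2 := by rw [integral_const_mul]; ring

theorem pow_four_mul_norm_deriv_sq_le {f : ℂ → ℂ} (hs : 0 < s)
    (hf : DiffContOnCl ℂ f (ball c s)) :
    s ^ 4 * ‖deriv f c‖ ^ 2 ≤ 2 ^ 27 * ∫ z in ball c s, (‖f z‖ - 1) ^ 2 := by
  set V := ∫ z in ball c s, (‖f z‖ - 1) ^ 2
  have hV_nonneg : 0 ≤ V := by positivity
  have hf_cont := hf.continuousOn_ball
  have ball_subset : ball c (s / 2) ⊆ ball c s := ball_subset_ball (by linarith)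
  suffices π * (s ^ 4 * ‖deriv f c‖ ^ 2) ≤ 3 * 2 ^ 27 * V by
    nlinarith [pi_gt_three, (by positivity : 0 ≤ s ^ 4 * ‖deriv f c‖ ^ 2)]
  rcases lt_or_ge (2 ^ 22 * V) (π * s ^ 2) with hV_small | hV_large
  · have half_ball := mul_norm_deriv_sq_le_of_half_le_norm (half_pos hs) (hf.mono ball_subset)
      fun z hz => half_le_norm_of_setIntegral_ball_lt hs hf hV_small hz
    have half_ball_le : ∫ z in ball c (s / 2), (‖f z‖ - 1) ^ 2 ≤ V :=
      setIntegral_ball_mono (by fun_prop) (fun _ => by positivity) ball_subset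
    linarith
  · have cauchy := mul_norm_deriv_sq_le_setIntegral_ball (half_pos hs)
      (by rwa [mul_div_cancel₀ s two_ne_zero])
    rw [mul_div_cancel₀ s two_ne_zero] at cauchy
    linarith [setIntegral_ball_norm_sq_le hs.le hf_cont]

end LocalEstimate

section Hardy

open Metric Real Set

variable {E : Type*} [NormedAddCommGroup E] [InnerProductSpace ℝ E]

lemma two_mul_inner_mul_le {p : ℝ} (hp : 0 < p) (u v : E) (q : ℝ) :
    2 * inner ℝ u v * q ≤ p * ‖u‖ ^ 2 / 2 + 2 * q ^ 2 / p * ‖v‖ ^ 2 := by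
  have square : p * ‖u‖ ^ 2 / 2 + 2 * q ^ 2 / p * ‖v‖ ^ 2 - 2 * inner ℝ u v * q =
      p / 2 * ‖u - (2 * q / p) • v‖ ^ 2 := by
    rw [norm_sub_sq_real, inner_smul_right, norm_smul, mul_pow, norm_eq_abs, sq_abs]
    field_simp
    ring
  rw [← sub_nonneg, square]
  positivity

theorem integral_mul_norm_sq_le_of_hasDerivAt {a b : ℝ} (hab : a ≤ b) {g g' : ℝ → E}
    {p ψ ψ' : ℝ → ℝ} (hg : ∀ r ∈ Icc a b, HasDerivAt g (g' r) r)
    (hg' : ContinuousOn g' (Icc a b)) (hg_zero : g a = 0)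
    (hψ : ∀ r ∈ Icc a b, HasDerivAt ψ (ψ' r) r) (hψ' : ContinuousOn ψ' (Icc a b))
    (hψ_nonneg : 0 ≤ ψ b) (hp : ContinuousOn p (Icc a b)) (hp_pos : ∀ r ∈ Icc a b, 0 < p r)
    (hψ_le : ∀ r ∈ Icc a b, ψ' r ≤ -p r) :
    ∫ r in a..b, p r * ‖g r‖ ^ 2 ≤ ∫ r in a..b, 4 * ψ r ^ 2 / p r * ‖g' r‖ ^ 2 := by
  have g_cont : ContinuousOn g (Icc a b) := fun r hr => (hg r hr).continuousAt.continuousWithinAt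
  have ψ_cont : ContinuousOn ψ (Icc a b) := fun r hr => (hψ r hr).continuousAt.continuousWithinAt
  have p_ne : ∀ r ∈ Icc a b, p r ≠ 0 := fun r hr => (hp_pos r hr).ne'
  have left_int : IntervalIntegrable (fun r => p r * ‖g r‖ ^ 2) volume a b :=
    ContinuousOn.intervalIntegrable_of_Icc hab (by fun_prop)
  have right_int : IntervalIntegrable (fun r => 4 * ψ r ^ 2 / p r * ‖g' r‖ ^ 2) volume a b :=
    ContinuousOn.intervalIntegrable_of_Icc hab (by fun_prop (disch := assumption))
  have deriv_int : IntervalIntegrable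
      (fun r => 2 * inner ℝ (g r) (g' r) * ψ r + ‖g r‖ ^ 2 * ψ' r) volume a b :=
    ContinuousOn.intervalIntegrable_of_Icc hab (by fun_prop)
  have boundary : 0 ≤ ∫ r in a..b, (2 * inner ℝ (g r) (g' r) * ψ r + ‖g r‖ ^ 2 * ψ' r) := by
    rw [intervalIntegral.integral_eq_sub_of_hasDerivAt (f := fun r => ‖g r‖ ^ 2 * ψ r)
      (fun r hr => ?_) deriv_int]
    · simp only [hg_zero, norm_zero]
      ring_nf
      positivity
    · rw [uIcc_of_le hab] at hr
      exact (hg r hr).norm_sq.mul (hψ r hr)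
  have pointwise : ∀ r ∈ Icc a b, 2 * inner ℝ (g r) (g' r) * ψ r + ‖g r‖ ^ 2 * ψ' r ≤
      2⁻¹ * (4 * ψ r ^ 2 / p r * ‖g' r‖ ^ 2) - 2⁻¹ * (p r * ‖g r‖ ^ 2) := by
    intro r hr
    have amgm := two_mul_inner_mul_le (hp_pos r hr) (g r) (g' r) (ψ r)
    have weight := mul_le_mul_of_nonneg_left (hψ_le r hr) (sq_nonneg ‖g r‖)
    linear_combination amgm + weight
  have integrated := intervalIntegral.integral_mono_on hab deriv_int
    ((right_int.const_mul 2⁻¹).sub (left_int.const_mul 2⁻¹)) pointwise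
  rw [intervalIntegral.integral_sub (right_int.const_mul _) (left_int.const_mul _),
    intervalIntegral.integral_const_mul, intervalIntegral.integral_const_mul] at integrated
  linarith

lemma setLIntegral_Ioi_le_of_forall_intervalIntegral_le {a : ℝ} {f g : ℝ → ℝ}
    (hf : ContinuousOn f (Ici a)) (hf_nonneg : ∀ r ∈ Ioi a, 0 ≤ f r)
    (hg : ContinuousOn g (Ici a)) (hg_nonneg : ∀ r ∈ Ioi a, 0 ≤ g r)
    (h : ∀ b, a ≤ b → ∫ r in a..b, f r ≤ ∫ r in a..b, g r) :
    ∫⁻ r in Ioi a, ENNReal.ofReal (f r) ≤ ∫⁻ r in Ioi a, ENNReal.ofReal (g r) := by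
  have lintegral_Ioc {u : ℝ → ℝ} (hu : ContinuousOn u (Ici a)) (hu_nonneg : ∀ r ∈ Ioi a, 0 ≤ u r)
      {b : ℝ} (hab : a ≤ b) :
      ∫⁻ r in Ioc a b, ENNReal.ofReal (u r) = ENNReal.ofReal (∫ r in a..b, u r) := by
    rw [intervalIntegral.integral_of_le hab, ofReal_integral_eq_lintegral_ofReal]
    · exact ((hu.mono Icc_subset_Ici_self).integrableOn_Icc).mono_set Ioc_subset_Icc_self
    · exact ae_restrict_of_forall_mem measurableSet_Ioc fun r hr => hu_nonneg r hr.1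
  have exhaustion : ⋃ n : ℕ, Ioc a (a + n) = Ioi a := by
    refine iUnion_Ioc_eq_Ioi_self_iff.2 fun x _ => ?_
    obtain ⟨n, hn⟩ := exists_nat_ge (x - a)
    exact ⟨n, by linarith⟩
  have directed : Directed (· ⊆ ·) fun n : ℕ => Ioc a (a + n) :=
    Monotone.directed_le fun m n hmn => Ioc_subset_Ioc_right (by gcongr)
  rw [← exhaustion, setLIntegral_iUnion_of_directed _ directed]
  refine iSup_le fun n => ?_
  have le_add : a ≤ a + n := le_add_of_nonneg_right n.cast_nonneg
  calc ∫⁻ r in Ioc a (a + n), ENNReal.ofReal (f r)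
      ≤ ∫⁻ r in Ioc a (a + n), ENNReal.ofReal (g r) := by
        rw [lintegral_Ioc hf hf_nonneg le_add, lintegral_Ioc hg hg_nonneg le_add]
        exact ENNReal.ofReal_le_ofReal (h _ le_add)
    _ ≤ _ := lintegral_mono_set (exhaustion ▸ subset_iUnion (fun n : ℕ => Ioc a (a + n)) n)

lemma hasDerivAt_gaussian_mul_one_add_exp_neg (r : ℝ) :
    HasDerivAt (fun r => exp (-r ^ 2) * (1 + exp (-r)))
      (-(exp (-r ^ 2) * (2 * r + (2 * r + 1) * exp (-r)))) r := by
  have gaussian : HasDerivAt (fun r => exp (-r ^ 2)) (exp (-r ^ 2) * (-(2 * r))) r := by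
    simpa using (hasDerivAt_pow 2 r).neg.exp
  have one_add : HasDerivAt (fun r => 1 + exp (-r)) (-exp (-r)) r := by
    simpa using (hasDerivAt_neg r).exp.const_add 1
  exact (gaussian.mul one_add).congr_deriv (by ring)

lemma setLIntegral_Ioi_one_add_mul_gaussian_mul_norm_sq_le {g g' : ℝ → E}
    (hg : ∀ r, 0 ≤ r → HasDerivAt g (g' r) r) (hg' : ContinuousOn g' (Ici 0)) (hg_zero : g 0 = 0) :
    ∫⁻ r in Ioi (0 : ℝ), ENNReal.ofReal ((1 + r) * exp (-r ^ 2) * ‖g r‖ ^ 2) ≤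
      ∫⁻ r in Ioi (0 : ℝ), ENNReal.ofReal (16 * exp (-r ^ 2) / (1 + r) * ‖g' r‖ ^ 2) := by
  have g_cont : ContinuousOn g (Ici 0) := fun r hr => (hg r hr).continuousAt.continuousWithinAt
  have one_add_pos : ∀ r ∈ Ici (0 : ℝ), 0 < 1 + r := fun r hr => by linarith [mem_Ici.1 hr]
  have one_add_ne : ∀ r ∈ Ici (0 : ℝ), 1 + r ≠ 0 := fun r hr => (one_add_pos r hr).ne'
  have right_cont :
      ContinuousOn (fun r => 16 * exp (-r ^ 2) / (1 + r) * ‖g' r‖ ^ 2) (Ici 0) := by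
    fun_prop (disch := assumption)
  refine setLIntegral_Ioi_le_of_forall_intervalIntegral_le (by fun_prop)
    (fun r hr => by have := mem_Ioi.1 hr; positivity) right_cont
    (fun r hr => by have := mem_Ioi.1 hr; positivity) fun b hb => ?_
  -- The factor `1 + exp (-r)` makes `-ψ'` at least `exp (-r ^ 2)` also near `r = 0`,
  -- where the derivative of the Gaussian vanishes.
  refine (integral_mul_norm_sq_le_of_hasDerivAt hb (fun r hr => hg r hr.1)
    (hg'.mono fun r hr => hr.1) hg_zero
    (fun r _ => hasDerivAt_gaussian_mul_one_add_exp_neg r) (by fun_prop) (by positivity)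
    (by fun_prop) (fun r hr => mul_pos (one_add_pos r hr.1) (exp_pos _)) fun r hr => ?_).trans ?_
  · have exp_ge : 1 - r ≤ exp (-r) := one_sub_le_exp_neg r
    have : 0 ≤ 2 * r * exp (-r) := mul_nonneg (by linarith [hr.1]) (exp_pos _).le
    rw [neg_le_neg_iff, mul_comm (1 + r)]
    exact mul_le_mul_of_nonneg_left (by linarith) (exp_pos _).le
  · refine intervalIntegral.integral_mono_on hb
      (ContinuousOn.intervalIntegrable_of_Icc hb ?_)
      ((right_cont.mono Icc_subset_Ici_self).intervalIntegrable_of_Icc hb) fun r hr => ?_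
    · have : ∀ r ∈ Icc 0 b, (1 + r) * exp (-r ^ 2) ≠ 0 := fun r hr =>
        mul_ne_zero (one_add_ne r hr.1) (exp_ne_zero _)
      have : ContinuousOn g' (Icc 0 b) := hg'.mono fun r hr => hr.1
      fun_prop (disch := assumption)
    · have := one_add_pos r hr.1
      have exp_le : exp (-r) ≤ 1 := exp_le_one_iff.2 (by linarith [hr.1])
      calc 4 * (exp (-r ^ 2) * (1 + exp (-r))) ^ 2 / ((1 + r) * exp (-r ^ 2)) * ‖g' r‖ ^ 2
          ≤ 4 * (exp (-r ^ 2) * (1 + 1)) ^ 2 / ((1 + r) * exp (-r ^ 2)) * ‖g' r‖ ^ 2 := by gcongr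
        _ = 16 * exp (-r ^ 2) / (1 + r) * ‖g' r‖ ^ 2 := by field_simp; ring

lemma lintegral_eq_lintegral_circleMap {f : ℂ → ENNReal} (hf : Measurable f) :
    ∫⁻ z, f z = ∫⁻ θ in Ioo (-π) π, ∫⁻ r in Ioi (0 : ℝ),
      ENNReal.ofReal r * f (circleMap 0 r θ) := by
  have symm_eq (p : ℝ × ℝ) : Complex.polarCoord.symm p = circleMap 0 p.1 p.2 := by
    rw [circleMap_eq_add_polarCoord_symm, zero_add]
  rw [← Complex.lintegral_comp_polarCoord_symm, polarCoord_target, Measure.volume_eq_prod,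
    ← Measure.prod_restrict]
  simp only [smul_eq_mul, symm_eq]
  refine lintegral_prod_symm _ (Measurable.aemeasurable ?_)
  have : Measurable fun p : ℝ × ℝ => circleMap 0 p.1 p.2 := by
    unfold circleMap
    fun_prop
  fun_prop

theorem lintegral_gaussian_hardy {F : ℂ → E} (hF : ContDiff ℝ 1 F) :
    ∫⁻ z, ENNReal.ofReal (exp (-‖z‖ ^ 2) * ‖F z - F 0‖ ^ 2) ≤
      ∫⁻ z, ENNReal.ofReal (16 * exp (-‖z‖ ^ 2) / (‖z‖ * (1 + ‖z‖)) * ‖fderiv ℝ F z‖ ^ 2) := by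
  have F_cont := hF.continuous
  have := hF.continuous_fderiv one_ne_zero
  rw [lintegral_eq_lintegral_circleMap (by fun_prop),
    lintegral_eq_lintegral_circleMap (by fun_prop)]
  refine lintegral_mono fun θ => ?_
  have norm_circleMap {r : ℝ} (hr : r ∈ Ioi 0) : ‖circleMap 0 r θ‖ = r := by
    rw [norm_circleMap_zero, abs_of_pos hr]
  set u : ℂ := Complex.exp (θ * Complex.I) with hu
  have ray (r : ℝ) : HasDerivAt (fun r : ℝ => circleMap 0 r θ) u r := by
    simpa [circleMap, ← hu] using Complex.ofRealCLM.hasDerivAt.mul_const u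
  have : Continuous fun r : ℝ => circleMap 0 r θ :=
    continuous_iff_continuousAt.2 fun r => (ray r).continuousAt
  have hardy := setLIntegral_Ioi_one_add_mul_gaussian_mul_norm_sq_le
    (g := fun r => F (circleMap 0 r θ) - F 0) (g' := fun r => fderiv ℝ F (circleMap 0 r θ) u)
    (fun r _ => ((hF.differentiable one_ne_zero _).hasFDerivAt.comp_hasDerivAt r
      (ray r)).sub_const _)
    (by fun_prop) (by simp [circleMap])
  calc _ ≤ ∫⁻ r in Ioi (0 : ℝ), ENNReal.ofReal
          ((1 + r) * exp (-r ^ 2) * ‖F (circleMap 0 r θ) - F 0‖ ^ 2) := by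
        refine setLIntegral_mono' measurableSet_Ioi fun r hr => ?_
        rw [norm_circleMap hr, ← ENNReal.ofReal_mul (le_of_lt hr), ← mul_assoc]
        gcongr
        linarith
    _ ≤ _ := hardy
    _ ≤ _ := by
        refine setLIntegral_mono' measurableSet_Ioi fun r hr => ?_
        have r_pos : 0 < r := hr
        have norm_le : ‖fderiv ℝ F (circleMap 0 r θ) u‖ ≤ ‖fderiv ℝ F (circleMap 0 r θ)‖ := by
          simpa [u, Complex.norm_exp_ofReal_mul_I] using (fderiv ℝ F (circleMap 0 r θ)).le_opNorm u
        rw [norm_circleMap hr, ← ENNReal.ofReal_mul r_pos.le]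
        refine ENNReal.ofReal_le_ofReal ?_
        calc 16 * exp (-r ^ 2) / (1 + r) * ‖fderiv ℝ F (circleMap 0 r θ) u‖ ^ 2
            ≤ 16 * exp (-r ^ 2) / (1 + r) * ‖fderiv ℝ F (circleMap 0 r θ)‖ ^ 2 := by gcongr
          _ = r * (16 * exp (-r ^ 2) / (r * (1 + r)) *
                ‖fderiv ℝ F (circleMap 0 r θ)‖ ^ 2) := by field_simp

lemma norm_fderiv_real_eq_norm_deriv {F : ℂ → ℂ} {z : ℂ} (hF : DifferentiableAt ℂ F z) :
    ‖fderiv ℝ F z‖ = ‖deriv F z‖ := by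
  rw [hF.fderiv_restrictScalars ℝ, ContinuousLinearMap.norm_restrictScalars,
    norm_deriv_eq_norm_fderiv]

end Hardy

section GaussianKernel

open Metric Real Set

lemma lintegral_mul_setLIntegral_comm {α β : Type*} [MeasurableSpace α] [MeasurableSpace β]
    {μ : Measure α} {ν : Measure β} [SFinite μ] [SFinite ν] {T : Set (α × β)}
    (hT : MeasurableSet T) {k : α → ENNReal} (hk : Measurable k) {φ : β → ENNReal}
    (hφ : Measurable φ) :
    ∫⁻ z, k z * ∫⁻ w in {w | (z, w) ∈ T}, φ w ∂ν ∂μ =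
      ∫⁻ w, φ w * ∫⁻ z in {z | (z, w) ∈ T}, k z ∂μ ∂ν := by
  have left_eq (z : α) : k z * ∫⁻ w in {w | (z, w) ∈ T}, φ w ∂ν =
      ∫⁻ w, T.indicator (fun q => k q.1 * φ q.2) (z, w) ∂ν := by
    rw [← lintegral_const_mul _ hφ,
      ← lintegral_indicator (s := {w | (z, w) ∈ T}) (measurable_prodMk_left hT)]
    rfl
  have right_eq (w : β) : φ w * ∫⁻ z in {z | (z, w) ∈ T}, k z ∂μ =
      ∫⁻ z, T.indicator (fun q => k q.1 * φ q.2) (z, w) ∂μ := by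
    rw [mul_comm, ← lintegral_mul_const _ hk,
      ← lintegral_indicator (s := {z | (z, w) ∈ T}) (measurable_prodMk_right hT)]
    rfl
  simp_rw [left_eq, right_eq]
  exact lintegral_lintegral_swap (Measurable.aemeasurable (by fun_prop (disch := assumption)))

lemma setLIntegral_ball_zero_inv_norm {r : ℝ} (hr : 0 ≤ r) :
    ∫⁻ z in ball (0 : ℂ) r, ENNReal.ofReal ‖z‖⁻¹ = ENNReal.ofReal (2 * π * r) := by
  have radial (θ : ℝ) : ∫⁻ t in Ioi (0 : ℝ), ENNReal.ofReal t *
      (ball (0 : ℂ) r).indicator (fun z => ENNReal.ofReal ‖z‖⁻¹) (circleMap 0 t θ) =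
      ENNReal.ofReal r := by
    calc _ = ∫⁻ t in Ioi (0 : ℝ), (Iio r).indicator 1 t := by
          refine setLIntegral_congr_fun measurableSet_Ioi fun t ht => ?_
          have t_pos : 0 < t := ht
          by_cases h : t < r
          · simp [h, abs_of_pos t_pos, ← ENNReal.ofReal_mul t_pos.le, t_pos.ne']
          · simp [h, abs_of_pos t_pos]
      _ = ENNReal.ofReal r := by
          rw [setLIntegral_indicator measurableSet_Iio, Iio_inter_Ioi, Pi.one_def,
            setLIntegral_one, Real.volume_Ioo, sub_zero]
  rw [← lintegral_indicator measurableSet_ball, lintegral_eq_lintegral_circleMap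
    (Measurable.indicator (by fun_prop) measurableSet_ball)]
  simp_rw [radial]
  rw [setLIntegral_const, Real.volume_Ioo, ← ENNReal.ofReal_mul hr]
  ring_nf

-- Rearrangement: outside `ball 0 r` the integrand is at most `r⁻¹`.
lemma setLIntegral_ball_inv_norm_le (c : ℂ) {r : ℝ} (hr : 0 < r) :
    ∫⁻ z in ball c r, ENNReal.ofReal ‖z‖⁻¹ ≤ ENNReal.ofReal (3 * π * r) := by
  have near : ∫⁻ z in ball c r ∩ ball 0 r, ENNReal.ofReal ‖z‖⁻¹ ≤ ENNReal.ofReal (2 * π * r) :=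
    (lintegral_mono_set inter_subset_right).trans_eq (setLIntegral_ball_zero_inv_norm hr.le)
  have far : ∫⁻ z in ball c r \ ball 0 r, ENNReal.ofReal ‖z‖⁻¹ ≤ ENNReal.ofReal (π * r) :=
    calc ∫⁻ z in ball c r \ ball 0 r, ENNReal.ofReal ‖z‖⁻¹
        ≤ ∫⁻ _ in ball c r \ ball 0 r, ENNReal.ofReal r⁻¹ := by
          refine setLIntegral_mono' (measurableSet_ball.diff measurableSet_ball) fun z hz => ?_
          have : r ≤ ‖z‖ := by simpa using hz.2
          gcongr
      _ ≤ ∫⁻ _ in ball c r, ENNReal.ofReal r⁻¹ := lintegral_mono_set sdiff_subset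
      _ = ENNReal.ofReal (π * r) := by
          rw [setLIntegral_const, volume_ball_complex c hr.le, ← ENNReal.ofReal_mul (by positivity)]
          congr 1
          field_simp
  rw [← lintegral_inter_add_sdiff _ _ measurableSet_ball (B := ball 0 r),
    show 3 * π * r = 2 * π * r + π * r by ring, ENNReal.ofReal_add (by positivity) (by positivity)]
  exact add_le_add near far

section Scale

variable {V : Type*} [SeminormedAddCommGroup V] {z w : V}

lemma dist_mul_one_add_norm_lt (h : dist w z < (1 + ‖z‖)⁻¹) : dist w z * (1 + ‖z‖) < 1 := by
  rwa [← one_div, lt_div_iff₀ (by positivity)] at h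

lemma dist_lt_one_of_dist_lt_inv (h : dist w z < (1 + ‖z‖)⁻¹) : dist w z < 1 :=
  h.trans_le (inv_le_one_of_one_le₀ (by linarith [norm_nonneg z]))

lemma exp_neg_norm_sq_le_of_dist_lt_inv (h : dist w z < (1 + ‖z‖)⁻¹) :
    exp (-‖z‖ ^ 2) ≤ exp 3 * exp (-‖w‖ ^ 2) := by
  have norm_le : ‖w‖ ≤ ‖z‖ + dist w z := by
    rw [dist_eq_norm]
    exact norm_le_norm_add_norm_sub' w z
  have sq_le : ‖w‖ ^ 2 ≤ (‖z‖ + dist w z) ^ 2 := by gcongr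
  rw [← exp_add, exp_le_exp]
  nlinarith [dist_mul_one_add_norm_lt h, dist_lt_one_of_dist_lt_inv h,
    dist_nonneg (x := w) (y := z)]

lemma one_add_norm_le_of_dist_lt_one (h : dist w z < 1) : 1 + ‖z‖ ≤ 2 * (1 + ‖w‖) := by
  have : ‖z‖ ≤ ‖w‖ + dist w z := by
    rw [dist_eq_norm]
    exact norm_le_norm_add_norm_sub w z
  linarith [norm_nonneg w]

lemma setOf_dist_lt_inv_subset_ball :
    {z : V | dist w z < (1 + ‖z‖)⁻¹} ⊆ ball w (2 / (1 + ‖w‖)) := by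
  intro z h
  have one_add_le : 1 + ‖w‖ ≤ 2 * (1 + ‖z‖) :=
    one_add_norm_le_of_dist_lt_one (by rw [dist_comm]; exact dist_lt_one_of_dist_lt_inv h)
  rw [mem_ball, dist_comm, lt_div_iff₀ (by positivity)]
  calc dist w z * (1 + ‖w‖) ≤ dist w z * (2 * (1 + ‖z‖)) := by gcongr
    _ < 2 := by linarith [dist_mul_one_add_norm_lt h]

end Scale

lemma one_add_pow_three_div_le {t : ℝ} (ht : 0 ≤ t) :
    (1 + t) ^ 3 / t ≤ 3 * (1 + t) ^ 2 + t⁻¹ := by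
  rcases ht.eq_or_lt with rfl | t_pos
  · norm_num
  · rw [div_le_iff₀ t_pos, add_mul, inv_mul_cancel₀ t_pos.ne']
    nlinarith [pow_pos t_pos 2, pow_pos t_pos 3]

lemma gaussian_kernel_le {z w : ℂ} (h : dist w z < (1 + ‖z‖)⁻¹) :
    exp (-‖z‖ ^ 2) * ((1 + ‖z‖) ^ 3 / ‖z‖) ≤
      exp 3 * exp (-‖w‖ ^ 2) * (12 * (1 + ‖w‖) ^ 2 + ‖z‖⁻¹) := by
  gcongr
  · exact exp_neg_norm_sq_le_of_dist_lt_inv h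
  · calc (1 + ‖z‖) ^ 3 / ‖z‖ ≤ 3 * (1 + ‖z‖) ^ 2 + ‖z‖⁻¹ := one_add_pow_three_div_le (norm_nonneg z)
      _ ≤ 3 * (2 * (1 + ‖w‖)) ^ 2 + ‖z‖⁻¹ := by
        gcongr
        exact one_add_norm_le_of_dist_lt_one (dist_lt_one_of_dist_lt_inv h)
      _ = 12 * (1 + ‖w‖) ^ 2 + ‖z‖⁻¹ := by ring

lemma setLIntegral_ball_const_add_inv_norm_le (c : ℂ) {b r : ℝ} (hb : 0 ≤ b) (hr : 0 < r) :
    ∫⁻ z in ball c r, ENNReal.ofReal (b + ‖z‖⁻¹) ≤ ENNReal.ofReal (π * r * (b * r + 3)) :=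
  calc ∫⁻ z in ball c r, ENNReal.ofReal (b + ‖z‖⁻¹)
      = ENNReal.ofReal b * volume (ball c r) + ∫⁻ z in ball c r, ENNReal.ofReal ‖z‖⁻¹ := by
        rw [← setLIntegral_const, ← lintegral_add_left measurable_const]
        congr with z
        exact ENNReal.ofReal_add hb (by positivity)
    _ ≤ ENNReal.ofReal b * ENNReal.ofReal (π * r ^ 2) + ENNReal.ofReal (3 * π * r) := by
        rw [volume_ball_complex c hr.le]
        gcongr
        exact setLIntegral_ball_inv_norm_le c hr
    _ = ENNReal.ofReal (π * r * (b * r + 3)) := by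
        rw [← ENNReal.ofReal_mul hb, ← ENNReal.ofReal_add (by positivity) (by positivity)]
        ring_nf

lemma exp_three_mul_fifty_four_mul_pi_le : exp 3 * (54 * π) ≤ 2 ^ 13 :=
  calc exp 3 * (54 * π) = exp 1 ^ 3 * (54 * π) := by norm_num
    _ ≤ 3 ^ 3 * (54 * 4) := by
        gcongr
        exacts [exp_one_lt_three.le, pi_le_four]
    _ ≤ 2 ^ 13 := by norm_num

lemma setLIntegral_gaussian_kernel_le (w : ℂ) :
    ∫⁻ z in {z | dist w z < (1 + ‖z‖)⁻¹},
        ENNReal.ofReal (exp (-‖z‖ ^ 2) * ((1 + ‖z‖) ^ 3 / ‖z‖)) ≤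
      ENNReal.ofReal (2 ^ 13 * exp (-‖w‖ ^ 2)) := by
  set ρ := 2 / (1 + ‖w‖) with hρ
  set a := exp 3 * exp (-‖w‖ ^ 2) with ha
  have ρ_pos : 0 < ρ := by positivity
  have ρ_le : ρ ≤ 2 := div_le_self zero_le_two (by linarith [norm_nonneg w])
  have a_nonneg : 0 ≤ a := by positivity
  have measurable_near : MeasurableSet {z : ℂ | dist w z < (1 + ‖z‖)⁻¹} :=
    measurableSet_lt (by fun_prop) (by fun_prop)
  calc _ ≤ ∫⁻ z in {z | dist w z < (1 + ‖z‖)⁻¹},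
          ENNReal.ofReal (a * (12 * (1 + ‖w‖) ^ 2 + ‖z‖⁻¹)) :=
        setLIntegral_mono' measurable_near fun z hz =>
          ENNReal.ofReal_le_ofReal (gaussian_kernel_le hz)
    _ ≤ ∫⁻ z in ball w ρ, ENNReal.ofReal (a * (12 * (1 + ‖w‖) ^ 2 + ‖z‖⁻¹)) :=
        lintegral_mono_set setOf_dist_lt_inv_subset_ball
    _ = ENNReal.ofReal a * ∫⁻ z in ball w ρ, ENNReal.ofReal (12 * (1 + ‖w‖) ^ 2 + ‖z‖⁻¹) := by
        simp_rw [ENNReal.ofReal_mul a_nonneg]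
        exact lintegral_const_mul _ (by fun_prop)
    _ ≤ ENNReal.ofReal a * ENNReal.ofReal (π * ρ * (12 * (1 + ‖w‖) ^ 2 * ρ + 3)) := by
        gcongr
        exact setLIntegral_ball_const_add_inv_norm_le w (by positivity) ρ_pos
    _ ≤ ENNReal.ofReal (2 ^ 13 * exp (-‖w‖ ^ 2)) := by
        rw [← ENNReal.ofReal_mul a_nonneg]
        refine ENNReal.ofReal_le_ofReal ?_
        have radius : π * ρ * (12 * (1 + ‖w‖) ^ 2 * ρ + 3) = 48 * π + 3 * π * ρ := by
          rw [hρ]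
          field_simp
          ring
        calc a * (π * ρ * (12 * (1 + ‖w‖) ^ 2 * ρ + 3)) ≤ a * (54 * π) := by
              rw [radius]
              gcongr
              nlinarith [pi_pos]
          _ = exp 3 * (54 * π) * exp (-‖w‖ ^ 2) := by rw [ha]; ring
          _ ≤ 2 ^ 13 * exp (-‖w‖ ^ 2) := by
              gcongr
              exact exp_three_mul_fifty_four_mul_pi_le

end GaussianKernel

section NearestUnitVector

variable {E : Type*} [NormedAddCommGroup E] [NormedSpace ℝ E] [Nontrivial E]

lemma exists_norm_eq_one_norm_sub_eq (a : E) : ∃ t : E, ‖t‖ = 1 ∧ ‖a - t‖ = |‖a‖ - 1| := by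
  rcases eq_or_ne a 0 with rfl | a_ne
  · obtain ⟨t, ht⟩ := exists_norm_eq E zero_le_one
    exact ⟨t, ht, by simp [ht]⟩
  · have norm_ne := norm_ne_zero_iff.2 a_ne
    refine ⟨‖a‖⁻¹ • a, by simp [norm_smul, norm_ne], ?_⟩
    have sub_eq : a - ‖a‖⁻¹ • a = (‖a‖ - 1) • ‖a‖⁻¹ • a := by
      rw [sub_smul, one_smul, smul_inv_smul₀ norm_ne]
    rw [sub_eq, norm_smul, norm_smul, norm_inv, norm_norm, inv_mul_cancel₀ norm_ne, mul_one,
      Real.norm_eq_abs]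

theorem exists_norm_eq_one_eLpNorm_sub_le {α : Type*} [MeasurableSpace α] {μ : Measure α}
    {p : ENNReal} (hp : 1 ≤ p) {f : α → E} (hf : AEStronglyMeasurable f μ) (a : E) :
    ∃ t : E, ‖t‖ = 1 ∧ eLpNorm (fun x => f x - t) p μ ≤
      2 * eLpNorm (fun x => f x - a) p μ + eLpNorm (fun x => ‖f x‖ - 1) p μ := by
  obtain ⟨t, norm_t, dist_t⟩ := exists_norm_eq_one_norm_sub_eq a
  refine ⟨t, norm_t, ?_⟩
  have pointwise (x : α) : ‖f x - t‖ ≤ ‖f x - a‖ + ‖f x - a‖ + |‖f x‖ - 1| := by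
    have := norm_sub_le_norm_sub_add_norm_sub (f x) a t
    have := abs_norm_sub_norm_le a (f x)
    rw [norm_sub_rev] at this
    linarith [abs_sub_le ‖a‖ ‖f x‖ 1]
  have sub_meas : AEStronglyMeasurable (fun x => ‖f x - a‖) μ :=
    (hf.sub aestronglyMeasurable_const).norm
  have dev_meas : AEStronglyMeasurable (fun x => |‖f x‖ - 1|) μ :=
    (hf.norm.sub aestronglyMeasurable_const).norm
  calc eLpNorm (fun x => f x - t) p μ
      ≤ eLpNorm ((fun x => ‖f x - a‖) + (fun x => ‖f x - a‖) + fun x => |‖f x‖ - 1|) p μ :=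
        eLpNorm_mono_real pointwise
    _ ≤ eLpNorm (fun x => ‖f x - a‖) p μ + eLpNorm (fun x => ‖f x - a‖) p μ +
          eLpNorm (fun x => |‖f x‖ - 1|) p μ :=
        (eLpNorm_add_le (sub_meas.add sub_meas) dev_meas hp).trans
          (add_le_add_left (eLpNorm_add_le sub_meas sub_meas hp) _)
    _ = 2 * eLpNorm (fun x => f x - a) p μ + eLpNorm (fun x => ‖f x‖ - 1) p μ := by
        simp only [← Real.norm_eq_abs, eLpNorm_norm, two_mul]

end NearestUnitVector

section FockBound

open Metric Real

-- At the scale `(1 + ‖z‖)⁻¹` the Gaussian varies only by a bounded factor.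
lemma norm_deriv_sq_le_lintegral_ball {F : ℂ → ℂ} (hF : Differentiable ℂ F) (z : ℂ) :
    ENNReal.ofReal (16 * exp (-‖z‖ ^ 2) / (‖z‖ * (1 + ‖z‖)) * ‖deriv F z‖ ^ 2) ≤
      2 ^ 31 * (ENNReal.ofReal (exp (-‖z‖ ^ 2) * ((1 + ‖z‖) ^ 3 / ‖z‖)) *
        ∫⁻ w in ball z (1 + ‖z‖)⁻¹, ENNReal.ofReal ((‖F w‖ - 1) ^ 2)) := by
  have F_cont := hF.continuous
  set D := ∫ w in ball z (1 + ‖z‖)⁻¹, (‖F w‖ - 1) ^ 2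
  have deriv_le : ‖deriv F z‖ ^ 2 ≤ 2 ^ 27 * (1 + ‖z‖) ^ 4 * D := by
    have := pow_four_mul_norm_deriv_sq_le (s := (1 + ‖z‖)⁻¹) (c := z) (by positivity)
      hF.diffContOnCl
    rw [inv_pow, inv_mul_le_iff₀ (by positivity)] at this
    linarith
  have D_eq : ∫⁻ w in ball z (1 + ‖z‖)⁻¹, ENNReal.ofReal ((‖F w‖ - 1) ^ 2) = ENNReal.ofReal D :=
    (ofReal_integral_eq_lintegral_ofReal (integrableOn_ball_of_continuousOn (by fun_prop))
      (.of_forall fun w => by positivity)).symm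
  have two_pow : (2 ^ 31 : ENNReal) = ENNReal.ofReal (2 ^ 31) := by simp
  rw [D_eq, two_pow, ← ENNReal.ofReal_mul (by positivity), ← ENNReal.ofReal_mul (by positivity)]
  refine ENNReal.ofReal_le_ofReal ?_
  calc 16 * exp (-‖z‖ ^ 2) / (‖z‖ * (1 + ‖z‖)) * ‖deriv F z‖ ^ 2
      ≤ 16 * exp (-‖z‖ ^ 2) / (‖z‖ * (1 + ‖z‖)) * (2 ^ 27 * (1 + ‖z‖) ^ 4 * D) := by gcongr
    _ = 2 ^ 31 * (exp (-‖z‖ ^ 2) * ((1 + ‖z‖) ^ 3 / ‖z‖) * D) := by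
        rw [mul_comm ‖z‖, ← div_div]
        field_simp
        ring

theorem lintegral_gaussian_norm_sub_center_sq_le {F : ℂ → ℂ} (hF : Differentiable ℂ F) :
    ∫⁻ z, ENNReal.ofReal (exp (-‖z‖ ^ 2) * ‖F z - F 0‖ ^ 2) ≤
      2 ^ 44 * ∫⁻ z, ENNReal.ofReal (exp (-‖z‖ ^ 2) * (‖F z‖ - 1) ^ 2) := by
  have F_cont := hF.continuous
  set k : ℂ → ENNReal := fun z => ENNReal.ofReal (exp (-‖z‖ ^ 2) * ((1 + ‖z‖) ^ 3 / ‖z‖))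
  set φ : ℂ → ENNReal := fun w => ENNReal.ofReal ((‖F w‖ - 1) ^ 2)
  have k_meas : Measurable k := by fun_prop
  have φ_meas : Measurable φ := by fun_prop
  calc _ ≤ ∫⁻ z, ENNReal.ofReal
          (16 * exp (-‖z‖ ^ 2) / (‖z‖ * (1 + ‖z‖)) * ‖deriv F z‖ ^ 2) := by
        simpa only [norm_fderiv_real_eq_norm_deriv (hF _)] using
          lintegral_gaussian_hardy (hF.contDiff.restrict_scalars ℝ)
    _ ≤ ∫⁻ z, 2 ^ 31 * (k z * ∫⁻ w in ball z (1 + ‖z‖)⁻¹, φ w) :=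
        lintegral_mono (norm_deriv_sq_le_lintegral_ball hF)
    _ = 2 ^ 31 * ∫⁻ z, k z * ∫⁻ w in {w | dist w z < (1 + ‖z‖)⁻¹}, φ w :=
        lintegral_const_mul' _ _ (by simp)
    _ = 2 ^ 31 * ∫⁻ w, φ w * ∫⁻ z in {z | dist w z < (1 + ‖z‖)⁻¹}, k z := by
        congr 1
        exact lintegral_mul_setLIntegral_comm
          (T := {p : ℂ × ℂ | dist p.2 p.1 < (1 + ‖p.1‖)⁻¹})
          (measurableSet_lt (by fun_prop) (by fun_prop)) k_meas φ_meas
    _ ≤ 2 ^ 31 * ∫⁻ w, φ w * ENNReal.ofReal (2 ^ 13 * exp (-‖w‖ ^ 2)) := by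
        gcongr with w
        exact setLIntegral_gaussian_kernel_le w
    _ = 2 ^ 44 * ∫⁻ w, ENNReal.ofReal (exp (-‖w‖ ^ 2) * (‖F w‖ - 1) ^ 2) := by
        have two_pow : ENNReal.ofReal (2 ^ 13) = 2 ^ 13 := by simp
        have rearrange (w : ℂ) : φ w * ENNReal.ofReal (2 ^ 13 * exp (-‖w‖ ^ 2)) =
            2 ^ 13 * ENNReal.ofReal (exp (-‖w‖ ^ 2) * (‖F w‖ - 1) ^ 2) := by
          rw [← ENNReal.ofReal_mul (by positivity), ← two_pow, ← ENNReal.ofReal_mul (by positivity)]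
          ring_nf
        simp_rw [rearrange]
        rw [lintegral_const_mul' _ _ (by simp), ← mul_assoc, ← pow_add]

end FockBound

section FockMeasure

open Real

/-- The Gaussian probability measure `π⁻¹ exp (-|z|²) dm(z)` on `ℂ`, for which the Fock norm is the
`L²` norm. -/
noncomputable def fockMeasure : Measure ℂ :=
  ENNReal.ofReal π⁻¹ • volume.withDensity fun z => ENNReal.ofReal (exp (-‖z‖ ^ 2))

lemma lintegral_fockMeasure {f : ℂ → ENNReal} (hf : Measurable f) :
    ∫⁻ z, f z ∂fockMeasure =
      ENNReal.ofReal π⁻¹ * ∫⁻ z, ENNReal.ofReal (exp (-‖z‖ ^ 2)) * f z := by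
  rw [fockMeasure, lintegral_smul_measure, smul_eq_mul,
    lintegral_withDensity_eq_lintegral_mul _ (by fun_prop) hf]
  rfl

lemma integral_exp_neg_norm_sq : ∫ z : ℂ, exp (-‖z‖ ^ 2) = π := by
  simpa using GaussianFourier.integral_rexp_neg_mul_sq_norm (V := ℂ) one_pos

instance isProbabilityMeasure_fockMeasure : IsProbabilityMeasure fockMeasure := by
  have gaussian_int : Integrable fun z : ℂ => exp (-‖z‖ ^ 2) :=
    .of_integral_ne_zero (integral_exp_neg_norm_sq ▸ pi_ne_zero)
  refine ⟨?_⟩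
  rw [← lintegral_one, lintegral_fockMeasure measurable_const]
  simp only [mul_one]
  rw [← ofReal_integral_eq_lintegral_ofReal gaussian_int (.of_forall fun z => (exp_pos _).le),
    integral_exp_neg_norm_sq, ← ENNReal.ofReal_mul (by positivity), inv_mul_cancel₀ pi_ne_zero,
    ENNReal.ofReal_one]

variable {E : Type*} [NormedAddCommGroup E] {f : ℂ → E}

lemma eLpNorm_two_fockMeasure_sq (hf : Continuous f) :
    eLpNorm f 2 fockMeasure ^ 2 =
      ENNReal.ofReal π⁻¹ * ∫⁻ z, ENNReal.ofReal (exp (-‖z‖ ^ 2) * ‖f z‖ ^ 2) := by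
  have eLpNorm_sq :=
    eLpNorm_nnreal_pow_eq_lintegral (f := f) (μ := fockMeasure) (p := 2) two_ne_zero
  simp only [ENNReal.coe_ofNat, NNReal.coe_ofNat, ENNReal.rpow_ofNat] at eLpNorm_sq
  rw [eLpNorm_sq, lintegral_fockMeasure (hf.enorm.measurable.pow_const 2)]
  congr with z
  rw [ENNReal.ofReal_mul (exp_pos _).le, ENNReal.ofReal_pow (norm_nonneg _), ofReal_norm]

lemma fockNorm_eq_toReal_eLpNorm (hf : Continuous f) :
    fockNorm f = (eLpNorm f 2 fockMeasure).toReal := by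
  rw [fockNorm, ← sqrt_sq ENNReal.toReal_nonneg, ← ENNReal.toReal_pow,
    eLpNorm_two_fockMeasure_sq hf, ENNReal.toReal_mul, ENNReal.toReal_ofReal (by positivity),
    one_div, integral_eq_lintegral_of_nonneg_ae (.of_forall fun z => by positivity)
      (by fun_prop)]
  simp only [mul_comm]

lemma memLp_two_fockMeasure (hf : Continuous f)
    (hf_int : Integrable fun z : ℂ => ‖f z‖ ^ 2 * exp (-‖z‖ ^ 2)) : MemLp f 2 fockMeasure := by
  refine ⟨hf.aestronglyMeasurable, ?_⟩
  refine (ENNReal.pow_lt_top_iff.1 ?_).resolve_right two_ne_zero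
  rw [eLpNorm_two_fockMeasure_sq hf]
  simp only [mul_comm (exp _)]
  exact ENNReal.mul_lt_top ENNReal.ofReal_lt_top hf_int.lintegral_lt_top

theorem eLpNorm_sub_center_le {F : ℂ → ℂ} (hF : Differentiable ℂ F) :
    eLpNorm (fun z => F z - F 0) 2 fockMeasure ≤
      2 ^ 22 * eLpNorm (fun z => ‖F z‖ - 1) 2 fockMeasure := by
  have F_cont := hF.continuous
  rw [← ENNReal.pow_le_pow_left_iff two_ne_zero, mul_pow,
    eLpNorm_two_fockMeasure_sq (by fun_prop), eLpNorm_two_fockMeasure_sq (by fun_prop),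
    mul_left_comm, ← pow_mul]
  simp only [norm_eq_abs, sq_abs]
  gcongr
  exact lintegral_gaussian_norm_sub_center_sq_le hF

end FockMeasure

/-- **Local stable phase retrieval at 1 in the Bargmann–Fock space.**
There is an absolute constant `M > 0` such that every entire `F` with finite Fock norm
satisfies `inf_{|λ|=1} ‖F − λ·1‖_F ≤ M ‖|F| − 1‖_F`. -/
theorem stmt0 :
    ∃ M : ℝ, 0 < M ∧
      ∀ F : ℂ → ℂ, Differentiable ℂ F →
        Integrable (fun z : ℂ => ‖F z‖ ^ 2 * Real.exp (-‖z‖ ^ 2)) →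
        (⨅ θ : Metric.sphere (0 : ℂ) 1, fockNorm (fun z => F z - θ.1))
          ≤ M * fockNorm (fun z => ‖F z‖ - 1) := by
  refine ⟨2 ^ 23 + 1, by positivity, fun F hF hF_int => ?_⟩
  have F_cont := hF.continuous
  have dev_memLp : MemLp (fun z => ‖F z‖ - 1) 2 fockMeasure :=
    (memLp_two_fockMeasure F_cont hF_int).norm.sub (memLp_const 1)
  obtain ⟨t, norm_t, le_t⟩ := exists_norm_eq_one_eLpNorm_sub_le one_le_two
    (F_cont.aestronglyMeasurable (μ := fockMeasure)) (F 0)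
  have stability : eLpNorm (fun z => F z - t) 2 fockMeasure ≤
      (2 ^ 23 + 1) * eLpNorm (fun z => ‖F z‖ - 1) 2 fockMeasure := by
    grw [le_t, eLpNorm_sub_center_le hF]
    exact le_of_eq (by ring)
  have bddBelow : BddBelow (Set.range fun θ : Metric.sphere (0 : ℂ) 1 =>
      fockNorm fun z => F z - θ.1) := ⟨0, by rintro _ ⟨θ, rfl⟩; exact Real.sqrt_nonneg _⟩
  refine (ciInf_le bddBelow ⟨t, by simpa using norm_t⟩).trans ?_
  rw [fockNorm_eq_toReal_eLpNorm (by fun_prop), fockNorm_eq_toReal_eLpNorm (by fun_prop)]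
  have toReal_const : (2 ^ 23 + 1 : ENNReal).toReal = 2 ^ 23 + 1 := by norm_num
  rw [← toReal_const, ← ENNReal.toReal_mul]
  exact ENNReal.toReal_mono (by finiteness [dev_memLp.2]) stability
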